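/- arXiv:2501.05812 — 4 statements merged into one kernel-verified Lean document; each statement's English description precedes it below -/
import Mathlib

section
/- Suppose the complex is exact, i.e. ker d_q = range d_{q−1} for every 0 ≤ q ≤ m (so in particular ker d_0 = 0 and range d_{m−1} = ker d_m = V_m). Then for every cochain endomorphism (φ_q) one has ∑_{q=0}^m (−1)^q tr(φ_q) = 0. -/
/-- Every linear map between vector spaces has a generalized inverse. -/
theorem exists_genInv {𝕜 V W : Type*} [Field 𝕜] [AddCommGroup V] [Module 𝕜 V]
    [AddCommGroup W] [Module 𝕜 W] (d : V →ₗ[𝕜] W) :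
    ∃ s : W →ₗ[𝕜] V, ∀ x, d (s (d x)) = d x := by
  obtain ⟨g, hg⟩ := d.rangeRestrict.exists_rightInverse_of_surjective d.range_rangeRestrict
  obtain ⟨s, hs⟩ := LinearMap.exists_extend g
  refine ⟨s, fun x => ?_⟩
  have h1 : s (d x) = g ⟨d x, LinearMap.mem_range_self d x⟩ := by
    rw [← hs]; rfl
  have h2 := LinearMap.congr_fun hg ⟨d x, LinearMap.mem_range_self d x⟩
  rw [h1]
  exact congrArg Subtype.val h2

/-- Let `V_0, …, V_m` be finite-dimensional `𝕜`-vector spaces with maps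
`d_q : V_q → V_{q+1}` satisfying `d_{q+1} ∘ d_q = 0` (conventions `d_{-1} = 0`,
`d_m = 0`). If the complex is exact (`ker d_q = range d_{q-1}` for all `0 ≤ q ≤ m`),
then every cochain endomorphism `(φ_q)` satisfies `∑ (−1)^q tr(φ_q) = 0`. -/
theorem stmt8 {𝕜 : Type*} [Field 𝕜] (m : ℕ) (hm : 1 ≤ m)
    (V : ℕ → Type*) [∀ q, AddCommGroup (V q)] [∀ q, Module 𝕜 (V q)]
    [∀ q, FiniteDimensional 𝕜 (V q)]
    (d : ∀ q, V q →ₗ[𝕜] V (q + 1))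
    (hdm : d m = 0)
    (hdd : ∀ q < m, d (q + 1) ∘ₗ d q = 0)
    (hexact0 : LinearMap.ker (d 0) = ⊥)
    (hexact : ∀ q < m, LinearMap.ker (d (q + 1)) = LinearMap.range (d q))
    (φ : ∀ q, V q →ₗ[𝕜] V q)
    (hφ : ∀ q < m, φ (q + 1) ∘ₗ d q = d q ∘ₗ φ q) :
    ∑ q ∈ Finset.range (m + 1), (-1 : 𝕜) ^ q * LinearMap.trace 𝕜 (V q) (φ q) = 0 := by
  choose s hs using fun q => exists_genInv (d q)
  have key : ∀ n, n ≤ m →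
      ∑ q ∈ Finset.range (n + 1), (-1 : 𝕜) ^ q * LinearMap.trace 𝕜 (V q) (φ q)
        = (-1) ^ n * LinearMap.trace 𝕜 (V n) (φ n ∘ₗ s n ∘ₗ d n) := by
    intro n
    induction n with
    | zero =>
      intro _
      have h : s 0 ∘ₗ d 0 = LinearMap.id := by
        ext x
        exact LinearMap.ker_eq_bot.mp hexact0 (hs 0 x)
      simp [h]
    | succ n ih =>
      intro hn
      have hlt : n < m := hn
      rw [Finset.sum_range_succ, ih hlt.le]
      have e1 : φ (n + 1) = φ (n + 1) ∘ₗ s (n + 1) ∘ₗ d (n + 1)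
          + d n ∘ₗ (φ n ∘ₗ s n ∘ₗ (LinearMap.id - s (n + 1) ∘ₗ d (n + 1))) := by
        ext x
        have hk : x - s (n + 1) (d (n + 1) x) ∈ LinearMap.range (d n) := by
          rw [← hexact n hlt, LinearMap.mem_ker, map_sub, hs, sub_self]
        obtain ⟨y, hy⟩ := hk
        have h3 := LinearMap.congr_fun (hφ n hlt) (s n (x - s (n + 1) (d (n + 1) x)))
        simp only [LinearMap.comp_apply] at h3
        simp only [LinearMap.add_apply, LinearMap.comp_apply, LinearMap.sub_apply,
          LinearMap.id_apply]
        rw [← h3, ← hy, hs, hy, ← map_add]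
        congr 1
        abel
      have e2 : (φ n ∘ₗ s n ∘ₗ (LinearMap.id - s (n + 1) ∘ₗ d (n + 1))) ∘ₗ d n
          = φ n ∘ₗ s n ∘ₗ d n := by
        ext x
        have h4 := LinearMap.congr_fun (hdd n hlt) x
        simp only [LinearMap.comp_apply, LinearMap.zero_apply] at h4
        simp [h4]
      have e3 : LinearMap.trace 𝕜 (V (n + 1)) (φ (n + 1))
          = LinearMap.trace 𝕜 (V (n + 1)) (φ (n + 1) ∘ₗ s (n + 1) ∘ₗ d (n + 1))
            + LinearMap.trace 𝕜 (V n) (φ n ∘ₗ s n ∘ₗ d n) := by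
        conv_lhs => rw [e1]
        rw [map_add, ← LinearMap.trace_comp_comm' (d n), e2]
      rw [e3]
      ring
  rw [key m le_rfl, hdm]
  simp
end

section
/- For every cochain endomorphism (φ_q), each φ_q maps ker d_q into itself and maps range d_{q−1} into itself, hence induces a linear endomorphism H(φ)_q of the cohomology space H^q = ker d_q / range d_{q−1}; and the Hopf trace formula holds: ∑_{q=0}^m (−1)^q tr(φ_q) = ∑_{q=0}^m (−1)^q tr(H(φ)_q). -/
theorem trace_add_of_exact {𝕜 U V W : Type*} [Field 𝕜] [AddCommGroup U] [Module 𝕜 U]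
    [AddCommGroup V] [Module 𝕜 V] [AddCommGroup W] [Module 𝕜 W]
    [FiniteDimensional 𝕜 U] [FiniteDimensional 𝕜 V] [FiniteDimensional 𝕜 W]
    (i : U →ₗ[𝕜] V) (q : V →ₗ[𝕜] W) (hi : Function.Injective i) (hq : Function.Surjective q)
    (hqi : ∀ u, q (i u) = 0) (hex : ∀ v, q v = 0 → ∃ u, i u = v)
    (a : U →ₗ[𝕜] U) (f : V →ₗ[𝕜] V) (b : W →ₗ[𝕜] W)
    (ha : ∀ u, f (i u) = i (a u)) (hb : ∀ v, q (f v) = b (q v)) :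
    LinearMap.trace 𝕜 V f = LinearMap.trace 𝕜 U a + LinearMap.trace 𝕜 W b := by
  obtain ⟨p, hp⟩ := i.exists_leftInverse_of_injective (LinearMap.ker_eq_bot.2 hi)
  obtain ⟨s, hs⟩ := q.exists_rightInverse_of_surjective (LinearMap.range_eq_top.2 hq)
  have hp' : ∀ u, p (i u) = u := fun u => LinearMap.congr_fun hp u
  have hs' : ∀ w, q (s w) = w := fun w => LinearMap.congr_fun hs w
  let t : W →ₗ[𝕜] V := s - i ∘ₗ p ∘ₗ s
  have e1 : f = (f ∘ₗ i) ∘ₗ p + (f ∘ₗ t) ∘ₗ q := by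
    ext v
    obtain ⟨u, hu⟩ := hex (v - s (q v)) (by simp [hs'])
    have hv : v = i u + s (q v) := by rw [hu]; abel
    have : v = i (p v) + t (q v) := by
      have h2 : p v = u + p (s (q v)) := by
        conv_lhs => rw [hv]
        simp [hp']
      simp only [t, LinearMap.sub_apply, LinearMap.comp_apply, h2, map_add]
      conv_lhs => rw [hv]
      abel
    conv_lhs => rw [this]
    simp
  have e2 : p ∘ₗ (f ∘ₗ i) = a := by
    ext u; simp [ha, hp']
  have e3 : q ∘ₗ (f ∘ₗ t) = b := by
    ext w; simp [hb, t, hqi, hs']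
  conv_lhs => rw [e1]
  rw [map_add, LinearMap.trace_comp_comm', e2, LinearMap.trace_comp_comm', e3]


/-- `range d_{q-1}`, with the convention `d_{-1} = 0` (so the value at `0` is `⊥`). -/
def rangePred {𝕜 : Type*} [Field 𝕜] {V : ℕ → Type*} [∀ q, AddCommGroup (V q)]
    [∀ q, Module 𝕜 (V q)] (d : ∀ q, V q →ₗ[𝕜] V (q + 1)) : ∀ q, Submodule 𝕜 (V q)
  | 0 => ⊥
  | (q + 1) => LinearMap.range (d q)

/-- For every cochain endomorphism `(φ_q)` of a finite complex of finite-dimensional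
vector spaces, each `φ_q` maps `ker d_q` into itself and `range d_{q-1}` into itself,
hence induces an endomorphism `ψ_q` of `H^q = ker d_q / range d_{q-1}`, and the Hopf
trace formula `∑ (−1)^q tr(φ_q) = ∑ (−1)^q tr(ψ_q)` holds. -/
theorem stmt9 {𝕜 : Type*} [Field 𝕜] (m : ℕ) (hm : 1 ≤ m)
    (V : ℕ → Type*) [∀ q, AddCommGroup (V q)] [∀ q, Module 𝕜 (V q)]
    [∀ q, FiniteDimensional 𝕜 (V q)]
    (d : ∀ q, V q →ₗ[𝕜] V (q + 1))
    (hdm : d m = 0)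
    (hdd : ∀ q < m, d (q + 1) ∘ₗ d q = 0)
    (φ : ∀ q, V q →ₗ[𝕜] V q)
    (hφ : ∀ q < m, φ (q + 1) ∘ₗ d q = d q ∘ₗ φ q) :
    (∀ q ≤ m, ∀ x ∈ LinearMap.ker (d q), φ q x ∈ LinearMap.ker (d q)) ∧
    (∀ q ≤ m, ∀ x ∈ rangePred d q, φ q x ∈ rangePred d q) ∧
    ∃ ψ : ∀ q, (LinearMap.ker (d q) ⧸
          (rangePred d q).comap (LinearMap.ker (d q)).subtype) →ₗ[𝕜]
        (LinearMap.ker (d q) ⧸ (rangePred d q).comap (LinearMap.ker (d q)).subtype),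
      (∀ q ≤ m, ∀ (x : LinearMap.ker (d q)) (hx : φ q (x : V q) ∈ LinearMap.ker (d q)),
        ψ q (Submodule.Quotient.mk x) = Submodule.Quotient.mk ⟨φ q (x : V q), hx⟩) ∧
      ∑ q ∈ Finset.range (m + 1), (-1 : 𝕜) ^ q * LinearMap.trace 𝕜 (V q) (φ q) =
        ∑ q ∈ Finset.range (m + 1), (-1 : 𝕜) ^ q *
          LinearMap.trace 𝕜 _ (ψ q) := by
  classical
  have hK : ∀ q ≤ m, ∀ x ∈ LinearMap.ker (d q), φ q x ∈ LinearMap.ker (d q) := by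
    intro q hq x hx
    rw [LinearMap.mem_ker] at hx ⊢
    rcases hq.lt_or_eq with h | rfl
    · have := LinearMap.congr_fun (hφ q h) x
      simp only [LinearMap.comp_apply, hx, map_zero] at this
      exact this.symm
    · simp [hdm]
  have hR : ∀ q ≤ m + 1, ∀ x ∈ rangePred d q, φ q x ∈ rangePred d q := by
    intro q hq x hx
    cases q with
    | zero =>
      have : x = 0 := hx
      simp [this]
    | succ q =>
      obtain ⟨y, rfl⟩ := hx
      rcases (Nat.le_of_succ_le_succ hq).lt_or_eq with h | rfl
      · exact ⟨φ q y, (LinearMap.congr_fun (hφ q h) y).symm⟩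
      · simp [hdm]
  have hRK : ∀ q ≤ m, rangePred d q ≤ LinearMap.ker (d q) := by
    intro q hq x hx
    cases q with
    | zero =>
      have : x = 0 := hx
      simp [this]
    | succ q =>
      obtain ⟨y, rfl⟩ := hx
      exact LinearMap.congr_fun (hdd q hq) y
  have exρ : ∀ q, ∃ ρ : rangePred d q →ₗ[𝕜] rangePred d q,
      q ≤ m + 1 → ∀ x, (ρ x : V q) = φ q x := by
    intro q
    by_cases h : q ≤ m + 1
    · exact ⟨(φ q).restrict (hR q h), fun _ x => rfl⟩
    · exact ⟨0, fun h' => absurd h' h⟩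
  have exκ : ∀ q, ∃ κ : LinearMap.ker (d q) →ₗ[𝕜] LinearMap.ker (d q),
      q ≤ m → ∀ x, (κ x : V q) = φ q x := by
    intro q
    by_cases h : q ≤ m
    · exact ⟨(φ q).restrict (hK q h), fun _ x => rfl⟩
    · exact ⟨0, fun h' => absurd h' h⟩
  choose ρ hρ using exρ
  choose κ hκ using exκ
  have exψ : ∀ q, ∃ ψ : (LinearMap.ker (d q) ⧸
          (rangePred d q).comap (LinearMap.ker (d q)).subtype) →ₗ[𝕜]
        (LinearMap.ker (d q) ⧸ (rangePred d q).comap (LinearMap.ker (d q)).subtype),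
      q ≤ m → ∀ x, ψ (Submodule.Quotient.mk x) = Submodule.Quotient.mk (κ q x) := by
    intro q
    by_cases h : q ≤ m
    · refine ⟨Submodule.mapQ _ _ (κ q) ?_, fun _ x => rfl⟩
      intro x hx
      simp only [Submodule.mem_comap, Submodule.subtype_apply] at hx ⊢
      rw [hκ q h]
      exact hR q (by omega) _ hx
    · exact ⟨0, fun h' => absurd h' h⟩
  choose ψ hψ using exψ
  refine ⟨hK, fun q hq => hR q (by omega), ψ, ?_, ?_⟩
  · intro q hq x hx
    rw [hψ q hq]
    congr 1
    exact Subtype.ext (hκ q hq x)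
  have T1 : ∀ q ≤ m, LinearMap.trace 𝕜 _ (φ q) =
      LinearMap.trace 𝕜 _ (κ q) + LinearMap.trace 𝕜 _ (ρ (q + 1)) := by
    intro q hq
    refine trace_add_of_exact (LinearMap.ker (d q)).subtype
      (W := LinearMap.range (d q)) (d q).rangeRestrict
      (Submodule.subtype_injective _) (LinearMap.surjective_rangeRestrict _) ?_ ?_ (κ q) (φ q)
      (ρ (q + 1)) ?_ ?_
    · intro u
      exact Subtype.ext u.2
    · intro v hv
      exact ⟨⟨v, congrArg Subtype.val hv⟩, rfl⟩
    · intro u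
      exact (hκ q hq u).symm
    · intro v
      refine Subtype.ext ?_
      refine Eq.trans ?_ (hρ (q + 1) (by omega) ⟨d q v, v, rfl⟩).symm
      change d q (φ q v) = φ (q + 1) (d q v)
      rcases hq.lt_or_eq with h | rfl
      · exact (LinearMap.congr_fun (hφ q h) v).symm
      · simp [hdm]
  have T2 : ∀ q ≤ m, LinearMap.trace 𝕜 _ (κ q) =
      LinearMap.trace 𝕜 _ (ρ q) + LinearMap.trace 𝕜 _ (ψ q) := by
    intro q hq
    refine trace_add_of_exact (Submodule.inclusion (hRK q hq)) (Submodule.mkQ _)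
      (Submodule.inclusion_injective _) (Submodule.mkQ_surjective _) ?_ ?_ _ _ _ ?_ ?_
    · intro u
      rw [Submodule.mkQ_apply, Submodule.Quotient.mk_eq_zero]
      exact u.2
    · intro v hv
      rw [Submodule.mkQ_apply, Submodule.Quotient.mk_eq_zero] at hv
      exact ⟨⟨v, hv⟩, rfl⟩
    · intro u
      refine Subtype.ext ?_
      rw [hκ q hq]
      exact (hρ q (by omega) u).symm
    · intro v
      exact (hψ q hq v).symm
  have r0 : LinearMap.trace 𝕜 _ (ρ 0) = 0 := by
    have : ρ 0 = 0 := by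
      ext x
      have hx : (ρ 0 x : V 0) = 0 := (ρ 0 x).2
      simpa using hx
    rw [this, map_zero]
  have r1 : LinearMap.trace 𝕜 _ (ρ (m + 1)) = 0 := by
    have : ρ (m + 1) = 0 := by
      ext x
      obtain ⟨y, hy⟩ := (ρ (m + 1) x).2
      rw [← hy, hdm]
      simp
    rw [this, map_zero]
  have key : ∀ n ≤ m + 1,
      ∑ q ∈ Finset.range n, (-1 : 𝕜) ^ q * LinearMap.trace 𝕜 (V q) (φ q) =
        ∑ q ∈ Finset.range n, (-1 : 𝕜) ^ q * LinearMap.trace 𝕜 _ (ψ q)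
          - (-1 : 𝕜) ^ n * LinearMap.trace 𝕜 _ (ρ n) := by
    intro n
    induction n with
    | zero => intro _; simp [r0]
    | succ n ih =>
      intro hn
      rw [Finset.sum_range_succ, Finset.sum_range_succ, ih (by omega), T1 n (by omega),
        T2 n (by omega), pow_succ]
      ring
  rw [key (m + 1) le_rfl, r1]
  simp
end

section
/- Let E be a finite-dimensional real normed vector space. Suppose given maps g_j : E → E (j ∈ ℕ), continuous linear maps A_j : E → E and A : E → E with A_j → A in operator norm, and constants C, r > 0 such that ‖g_j(v) − A_j v‖ ≤ C‖v‖² for all j and all v with ‖v‖ ≤ r. If (v_j) is a sequence of nonzero vectors with v_j → 0 and g_j(v_j) = v_j for every j, then there exists a unit vector u ∈ E with A u = u; in particular A − id is not injective. -/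
open Filter

/-- Let `E` be a finite-dimensional real normed space, `g_j : E → E`, `A_j → A` in
operator norm, with `‖g_j v − A_j v‖ ≤ C‖v‖²` for `‖v‖ ≤ r`. If `v_j ≠ 0`, `v_j → 0`
and `g_j (v_j) = v_j` for all `j`, then there is a unit vector `u` with `A u = u`;
in particular `A − id` is not injective. -/
theorem stmt11 {E : Type*} [NormedAddCommGroup E] [NormedSpace ℝ E]
    [FiniteDimensional ℝ E]
    (g : ℕ → E → E) (A : ℕ → E →L[ℝ] E) (L : E →L[ℝ] E)
    (hA : Tendsto (fun j => ‖A j - L‖) atTop (nhds 0))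
    (C r : ℝ) (hC : 0 < C) (hr : 0 < r)
    (hg : ∀ j : ℕ, ∀ v : E, ‖v‖ ≤ r → ‖g j v - A j v‖ ≤ C * ‖v‖ ^ 2)
    (v : ℕ → E) (hv0 : ∀ j, v j ≠ 0) (hvlim : Tendsto v atTop (nhds 0))
    (hfix : ∀ j, g j (v j) = v j) :
    (∃ u : E, ‖u‖ = 1 ∧ L u = u) ∧
      ¬ Function.Injective ⇑(L - ContinuousLinearMap.id ℝ E) := by
  have hninj : ¬ Function.Injective ⇑(L - ContinuousLinearMap.id ℝ E) := by
    intro hinj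
    obtain ⟨K, -, hK⟩ := LinearMap.exists_antilipschitzWith
      ((L - ContinuousLinearMap.id ℝ E : E →L[ℝ] E) : E →ₗ[ℝ] E)
      (LinearMap.ker_eq_bot.2 hinj)
    have hn : Tendsto (fun j => ‖v j‖) atTop (nhds 0) := by simpa using hvlim.norm
    have hlim : Tendsto (fun j => (K : ℝ) * (‖A j - L‖ + C * ‖v j‖)) atTop (nhds 0) := by
      simpa using (hA.add (hn.const_mul C)).const_mul (K : ℝ)
    have h1 : ∀ᶠ j in atTop, (K : ℝ) * (‖A j - L‖ + C * ‖v j‖) < 1 :=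
      hlim.eventually_lt_const one_pos
    have h2 : ∀ᶠ j in atTop, ‖v j‖ < r := hn.eventually_lt_const hr
    obtain ⟨j, hj1, hj2⟩ := (h1.and h2).exists
    have hpos : 0 < ‖v j‖ := norm_pos_iff.2 (hv0 j)
    have a1 : ‖v j‖ ≤ K * ‖L (v j) - v j‖ := by
      have := hK.le_mul_dist (v j) 0
      simpa using this
    have a2 := hg j (v j) hj2.le
    rw [hfix j] at a2
    have a3 : ‖A j (v j) - L (v j)‖ ≤ ‖A j - L‖ * ‖v j‖ := (A j - L).le_opNorm (v j)
    have a4 : ‖L (v j) - v j‖ ≤ ‖A j - L‖ * ‖v j‖ + C * ‖v j‖ ^ 2 := by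
      have e : L (v j) - v j = -((v j - A j (v j)) + (A j (v j) - L (v j))) := by abel
      rw [e, norm_neg]
      linarith [norm_add_le (v j - A j (v j)) (A j (v j) - L (v j))]
    have a5 := mul_le_mul_of_nonneg_left a4 K.coe_nonneg
    have a6 := mul_lt_mul_of_pos_right hj1 hpos
    nlinarith
  refine ⟨?_, hninj⟩
  by_contra hno
  apply hninj
  rw [injective_iff_map_eq_zero]
  intro w hw
  by_contra hw0
  have hLw : L w = w := by simpa [sub_eq_zero] using hw
  exact hno ⟨‖w‖⁻¹ • w, by simp [norm_smul, hw0], by rw [map_smul, hLw]⟩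
end

section
/- Let n ≥ 1, let U ⊆ ℝⁿ be open with 0 ∈ U, and let φ : U → ℝⁿ be an injective continuously differentiable map with φ(0) = 0 and det Dφ(x) ≠ 0 for every x ∈ U. Let χ : ℝⁿ → ℝ be continuous with compact support and ∫_{ℝⁿ} χ(y) dy = 1, and let w : ℝⁿ → ℝ be continuous with compact support contained in U. Then, as k → ∞ over the natural numbers, ∫_U kⁿ χ(k φ(x)) w(x) dx converges to w(0) / |det Dφ(0)|. -/
open MeasureTheory Filter

/-- Let `U ⊆ ℝⁿ` be open with `0 ∈ U`, and `φ : U → ℝⁿ` an injective `C¹` map with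
`φ 0 = 0` and everywhere nonvanishing Jacobian determinant. Let `χ` be continuous with
compact support and integral `1`, and `w` continuous with compact support contained in
`U`. Then `∫_U kⁿ χ(k φ(x)) w(x) dx → w(0) / |det Dφ(0)|` as `k → ∞`. -/
theorem stmt15 (n : ℕ) (hn : 1 ≤ n)
    (U : Set (Fin n → ℝ)) (hU : IsOpen U) (h0 : (0 : Fin n → ℝ) ∈ U)
    (φ : (Fin n → ℝ) → (Fin n → ℝ)) (hinj : Set.InjOn φ U)
    (Dφ : (Fin n → ℝ) → ((Fin n → ℝ) →L[ℝ] (Fin n → ℝ)))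
    (hderiv : ∀ x ∈ U, HasFDerivWithinAt φ (Dφ x) U x)
    (hDcont : ContinuousOn Dφ U)
    (hφ0 : φ 0 = 0)
    (hdet : ∀ x ∈ U, LinearMap.det ((Dφ x) : (Fin n → ℝ) →ₗ[ℝ] (Fin n → ℝ)) ≠ 0)
    (χ : (Fin n → ℝ) → ℝ) (hχ : Continuous χ) (hχc : HasCompactSupport χ)
    (hχ1 : ∫ y : Fin n → ℝ, χ y = 1)
    (w : (Fin n → ℝ) → ℝ) (hw : Continuous w) (hwc : HasCompactSupport w)
    (hwU : tsupport w ⊆ U) :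
    Tendsto (fun k : ℕ => ∫ x in U, (k : ℝ) ^ n * χ ((k : ℝ) • φ x) * w x)
      atTop
      (nhds (w 0 / |LinearMap.det ((Dφ 0) : (Fin n → ℝ) →ₗ[ℝ] (Fin n → ℝ))|)) := by
  classical
  set d : (Fin n → ℝ) → ℝ := fun x => |(Dφ x).det| with hd
  have hd0 : ∀ x ∈ U, d x ≠ 0 := fun x hx => abs_ne_zero.mpr (hdet x hx)
  have hDat : ∀ x ∈ U, ContinuousAt Dφ x := fun x hx => hDcont.continuousAt (hU.mem_nhds hx)
  have hmap : ∀ x ∈ U, Filter.map φ (nhds x) = nhds (φ x) := by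
    intro x hx
    have hs : HasStrictFDerivAt φ (Dφ x) x := by
      apply hasStrictFDerivAt_of_hasFDerivAt_of_continuousAt _ (hDat x hx)
      filter_upwards [hU.mem_nhds hx] with z hz
      exact (hderiv z hz).hasFDerivAt (hU.mem_nhds hz)
    have hs' : HasStrictFDerivAt φ
        (((Dφ x).toContinuousLinearEquivOfDetNeZero (hdet x hx) :
          (Fin n → ℝ) ≃L[ℝ] (Fin n → ℝ)) : (Fin n → ℝ) →L[ℝ] (Fin n → ℝ)) x := by
      simpa using hs
    exact hs'.map_nhds_eq_of_equiv
  set ψ := Function.invFunOn φ U with hψ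
  have hψφ : ∀ x ∈ U, ψ (φ x) = x := fun x hx => hinj.leftInvOn_invFunOn hx
  set G : (Fin n → ℝ) → ℝ := (φ '' U).indicator (fun y => w (ψ y) / d (ψ y)) with hG
  have hGφ : ∀ x ∈ U, G (φ x) = w x / d x := by
    intro x hx
    rw [hG, Set.indicator_of_mem (Set.mem_image_of_mem φ hx), hψφ x hx]
  have hφc : ContinuousOn φ U := fun x hx => (hderiv x hx).continuousWithinAt
  have hK : IsCompact (φ '' tsupport w) := hwc.isCompact.image_of_continuousOn (hφc.mono hwU)
  have hGz : ∀ y ∉ φ '' tsupport w, G y = 0 := by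
    intro y hy
    by_cases h : y ∈ φ '' U
    · obtain ⟨x, hx, rfl⟩ := h
      rw [hGφ x hx, image_eq_zero_of_notMem_tsupport (fun h => hy ⟨x, h, rfl⟩), zero_div]
    · exact Set.indicator_of_notMem h _
  have hGc : Continuous G := by
    rw [continuous_iff_continuousAt]
    intro y
    by_cases h : y ∈ φ '' U
    · obtain ⟨x, hx, rfl⟩ := h
      unfold ContinuousAt
      rw [← hmap x hx, tendsto_map'_iff, hGφ x hx]
      have hdc : ContinuousAt d x :=
        (ContinuousLinearMap.continuous_det.continuousAt.comp (hDat x hx)).abs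
      refine (hw.continuousAt.div hdc (hd0 x hx)).congr' ?_
      filter_upwards [hU.mem_nhds hx] with z hz
      exact (hGφ z hz).symm
    · have : y ∈ (φ '' tsupport w)ᶜ := fun h' => h (Set.image_mono hwU h')
      refine (continuousAt_const (y := (0:ℝ))).congr ?_
      filter_upwards [hK.isClosed.isOpen_compl.mem_nhds this] with z hz
      exact (hGz z hz).symm
  have hGs : HasCompactSupport G := HasCompactSupport.intro hK hGz
  obtain ⟨C, hC⟩ := hGs.exists_bound_of_continuous hGc
  have key : ∀ k : ℕ, 1 ≤ k → ∫ x in U, (k : ℝ) ^ n * χ ((k : ℝ) • φ x) * w x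
      = ∫ z, χ z * G ((k : ℝ)⁻¹ • z) := by
    intro k hk
    have hk0 : (0:ℝ) < k := by exact_mod_cast hk
    have h1 : ∫ x in U, (k : ℝ) ^ n * χ ((k : ℝ) • φ x) * w x
        = ∫ y in φ '' U, (k : ℝ) ^ n * (χ ((k : ℝ) • y) * G y) := by
      rw [integral_image_eq_integral_abs_det_fderiv_smul volume hU.measurableSet hderiv hinj]
      refine setIntegral_congr_fun hU.measurableSet ?_
      intro x hx
      have := hd0 x hx
      simp only [hGφ x hx, smul_eq_mul]
      change _ = d x * _
      field_simp
    have h2 : ∫ y in φ '' U, (k : ℝ) ^ n * (χ ((k : ℝ) • y) * G y)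
        = ∫ y, (k : ℝ) ^ n * (χ ((k : ℝ) • y) * G y) := by
      apply setIntegral_eq_integral_of_forall_compl_eq_zero
      intro y hy
      rw [hG, Set.indicator_of_notMem hy]
      simp
    have h3 := Measure.integral_comp_smul (volume : Measure (Fin n → ℝ))
      (fun z => χ z * G ((k : ℝ)⁻¹ • z)) (k : ℝ)
    simp only [smul_smul, inv_mul_cancel₀ hk0.ne', one_smul, Module.finrank_fin_fun,
      smul_eq_mul] at h3
    rw [h1, h2, integral_const_mul, h3, abs_of_pos (by positivity), ← mul_assoc,
      mul_inv_cancel₀ (by positivity), one_mul]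
  have hG0 : G 0 = w 0 / d 0 := by simpa [hφ0] using hGφ 0 h0
  have hlim : Tendsto (fun k : ℕ => ∫ z, χ z * G ((k : ℝ)⁻¹ • z)) atTop
      (nhds (∫ z, χ z * G 0)) := by
    apply tendsto_integral_of_dominated_convergence (fun z => ‖χ z‖ * C)
    · intro k
      exact Continuous.aestronglyMeasurable (by fun_prop)
    · exact (hχ.integrable_of_hasCompactSupport hχc).norm.mul_const C
    · intro k
      refine Eventually.of_forall fun z => ?_
      rw [norm_mul]
      exact mul_le_mul_of_nonneg_left (hC _) (norm_nonneg _)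
    · refine Eventually.of_forall fun z => ?_
      have ht : Tendsto (fun k : ℕ => (k : ℝ)⁻¹ • z) atTop (nhds 0) := by
        simpa using (tendsto_inv_atTop_nhds_zero_nat (𝕜 := ℝ)).smul_const z
      exact ((hGc.tendsto 0).comp ht).const_mul _
  rw [integral_mul_const, hχ1, one_mul, hG0] at hlim
  refine hlim.congr' ?_
  filter_upwards [eventually_ge_atTop 1] with k hk
  exact (key k hk).symm
end
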